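/- For all integers r ≥ 0 and m, ℓ with 0 ≤ m ≤ ℓ ≤ r + 1 there exists a constant C > 0, depending only on r, ℓ and m, with the following property: for all real numbers a < b, every ℓ-times continuously differentiable function ψ : [a,b] → ℝ, and every real polynomial q of degree at most r satisfying ∫_a^b (ψ(t) − q(t))·p(t) dt = 0 for every real polynomial p of degree at most r, one has ‖(ψ − q)^{(m)}‖_{L²(a,b)} ≤ C (b−a)^{ℓ−m} ‖ψ^{(ℓ)}‖_{L²(a,b)}, where the superscripts denote derivatives of the indicated order. -/

import Mathlib

/-!
Let `T` be the Taylor polynomial of `ψ` at `a` with `ℓ` terms. Since `ℓ ≤ r + 1`, the projection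
of `g = ψ - T` is `q - T`, so `ψ - q = g - (q - T)`, while `g` and `ψ` have the same derivative of
order `ℓ`. As the derivatives of `g` of order less than `ℓ` vanish at `a`, iterating Friedrichs'
inequality bounds `g^{(m)}` and `g` by `(b - a)^{ℓ - m} ψ^{(ℓ)}` and `(b - a)^ℓ ψ^{(ℓ)}` in `L²`.
The projection does not increase the norm, so the second bound passes to `q - T`. A linear map on
the finite-dimensional space of polynomials of degree at most `r` is bounded in `L²(0,1)`, and
rescaling shows that differentiating `q - T` `m` times costs a factor `(b - a)^{-m}`.
-/

open MeasureTheory Polynomial Set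

section L2

variable {α E : Type*} [MeasurableSpace α] [NormedAddCommGroup E] {μ : Measure α}

lemma memLp_restrict_of_continuousOn_isCompact [TopologicalSpace α] [OpensMeasurableSpace α]
    [TopologicalSpace.PseudoMetrizableSpace α] [IsFiniteMeasureOnCompacts μ] {f : α → E} {s : Set α}
    (hf : ContinuousOn f s) (hs : IsCompact s) (hs' : MeasurableSet s) (p : ENNReal) :
    MemLp f p (μ.restrict s) := by
  have : IsFiniteMeasure (μ.restrict s) := ⟨by simpa using hs.measure_lt_top⟩
  obtain ⟨M, hM⟩ := hs.exists_bound_of_continuousOn hf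
  exact .of_bound (hf.aestronglyMeasurable_of_isCompact hs hs') M
    (ae_restrict_of_forall_mem hs' hM)

lemma memLp_restrict_Ioc_of_continuousOn_Icc {f : ℝ → E} {a b : ℝ} (hf : ContinuousOn f (Icc a b))
    (p : ENNReal) : MemLp f p (volume.restrict (Ioc a b)) :=
  (memLp_restrict_of_continuousOn_isCompact hf isCompact_Icc measurableSet_Icc p).mono_measure
    (Measure.restrict_mono_set _ Ioc_subset_Icc_self)

lemma sq_integral_le_measureReal_univ_mul_integral_sq [IsFiniteMeasure μ] {f : α → ℝ}
    (hf : MemLp f 2 μ) : (∫ x, f x ∂μ) ^ 2 ≤ μ.real univ * ∫ x, f x ^ 2 ∂μ := by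
  rcases eq_zero_or_neZero μ with rfl | _
  · simp
  have hμ : μ.real univ ≠ 0 := measureReal_univ_ne_zero
  have hjensen : (⨍ x, f x ∂μ) ^ 2 ≤ ⨍ x, f x ^ 2 ∂μ :=
    even_two.convexOn_pow.map_average_le (continuousOn_pow 2) isClosed_univ (by simp)
      (hf.integrable one_le_two) hf.integrable_sq
  simp only [average_eq, smul_eq_mul] at hjensen
  calc (∫ x, f x ∂μ) ^ 2
      = μ.real univ ^ 2 * ((μ.real univ)⁻¹ * ∫ x, f x ∂μ) ^ 2 := by field_simp
    _ ≤ μ.real univ ^ 2 * ((μ.real univ)⁻¹ * ∫ x, f x ^ 2 ∂μ) := by gcongr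
    _ = μ.real univ * ∫ x, f x ^ 2 ∂μ := by field_simp

lemma integral_norm_sub_sq_le {f g : α → E} (hf : MemLp f 2 μ) (hg : MemLp g 2 μ) :
    ∫ x, ‖f x - g x‖ ^ 2 ∂μ ≤ 2 * ∫ x, ‖f x‖ ^ 2 ∂μ + 2 * ∫ x, ‖g x‖ ^ 2 ∂μ := by
  have hf2 := (hf.integrable_norm_pow two_ne_zero).const_mul 2
  have hg2 := (hg.integrable_norm_pow two_ne_zero).const_mul 2
  have hpt (x : α) : ‖f x - g x‖ ^ 2 ≤ 2 * ‖f x‖ ^ 2 + 2 * ‖g x‖ ^ 2 :=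
    calc ‖f x - g x‖ ^ 2 ≤ (‖f x‖ + ‖g x‖) ^ 2 := by gcongr; exact norm_sub_le _ _
      _ ≤ 2 * (‖f x‖ ^ 2 + ‖g x‖ ^ 2) := add_sq_le
      _ = 2 * ‖f x‖ ^ 2 + 2 * ‖g x‖ ^ 2 := mul_add _ _ _
  rw [← integral_const_mul, ← integral_const_mul, ← integral_add hf2 hg2]
  exact integral_mono ((hf.sub hg).integrable_norm_pow two_ne_zero) (hf2.add hg2) hpt

lemma integral_sq_eq_add_of_integral_sub_mul_eq_zero {f g : α → ℝ} (hf : MemLp f 2 μ)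
    (hg : MemLp g 2 μ) (h : ∫ x, (f x - g x) * g x ∂μ = 0) :
    ∫ x, f x ^ 2 ∂μ = ∫ x, (f x - g x) ^ 2 ∂μ + ∫ x, g x ^ 2 ∂μ := by
  have hsub2 : Integrable (fun x ↦ (f x - g x) ^ 2) μ := (hf.sub hg).integrable_sq
  have hadd : Integrable (fun x ↦ (f x - g x) ^ 2 + g x ^ 2) μ := hsub2.add hg.integrable_sq
  have hmul : Integrable (fun x ↦ 2 * ((f x - g x) * g x)) μ :=
    ((hf.sub hg).integrable_mul hg).const_mul 2
  calc ∫ x, f x ^ 2 ∂μ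
      = ∫ x, ((f x - g x) ^ 2 + g x ^ 2 + 2 * ((f x - g x) * g x)) ∂μ := by
        congr 1 with x
        ring
    _ = ∫ x, (f x - g x) ^ 2 ∂μ + ∫ x, g x ^ 2 ∂μ := by
      rw [integral_add hadd hmul, integral_add hsub2 hg.integrable_sq,
        integral_const_mul, h, mul_zero, add_zero]

end L2

section Friedrichs

variable {E : Type*} [NormedAddCommGroup E] [NormedSpace ℝ E] [CompleteSpace E] {a b c : ℝ}

lemma norm_sub_sq_le_integral_norm_sq_deriv {f f' : ℝ → E}
    (hf : ∀ t ∈ Icc a b, HasDerivWithinAt f (f' t) (Icc a b) t) (hf' : ContinuousOn f' (Icc a b))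
    (hc : c ∈ Icc a b) {t : ℝ} (ht : t ∈ Icc a b) :
    ‖f t - f c‖ ^ 2 ≤ (b - a) * ∫ x in a..b, ‖f' x‖ ^ 2 := by
  have hsub : uIcc c t ⊆ Icc a b := uIcc_subset_Icc hc ht
  have hab : a ≤ b := hc.1.trans hc.2
  have hftc : ∫ x in c..t, f' x = f t - f c := by
    refine intervalIntegral.integral_eq_sub_of_hasDeriv_right
      (fun x hx ↦ (hf x (hsub hx)).continuousWithinAt.mono hsub) (fun x hx ↦ ?_)
      (hf'.mono hsub).intervalIntegrable
    have hxab : Icc a b ∈ nhds x :=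
      Icc_mem_nhds ((le_min hc.1 ht.1).trans_lt hx.1) (hx.2.trans_le (max_le hc.2 ht.2))
    exact ((hf x (mem_of_mem_nhds hxab)).hasDerivAt hxab).hasDerivWithinAt
  have hL2 := (memLp_restrict_Ioc_of_continuousOn_Icc hf' 2).norm
  have hbound : ‖f t - f c‖ ≤ ∫ x in Ioc a b, ‖f' x‖ := by
    rw [← hftc]
    refine intervalIntegral.norm_integral_le_integral_norm_uIoc.trans ?_
    exact setIntegral_mono_set (hL2.integrable one_le_two) (.of_forall fun _ ↦ norm_nonneg _)
      (Ioc_subset_Ioc (le_min hc.1 ht.1) (max_le hc.2 ht.2)).eventuallyLE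
  calc ‖f t - f c‖ ^ 2 ≤ (∫ x in Ioc a b, ‖f' x‖) ^ 2 := by gcongr
    _ ≤ (b - a) * ∫ x in a..b, ‖f' x‖ ^ 2 := by
      simpa [hab, intervalIntegral.integral_of_le] using
        sq_integral_le_measureReal_univ_mul_integral_sq hL2

lemma integral_norm_sq_le_integral_norm_sq_deriv {f f' : ℝ → E}
    (hf : ∀ t ∈ Icc a b, HasDerivWithinAt f (f' t) (Icc a b) t) (hf' : ContinuousOn f' (Icc a b))
    (hc : c ∈ Icc a b) (hfc : f c = 0) :
    ∫ t in a..b, ‖f t‖ ^ 2 ≤ (b - a) ^ 2 * ∫ t in a..b, ‖f' t‖ ^ 2 := by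
  have hab : a ≤ b := hc.1.trans hc.2
  have hcont : ContinuousOn f (Icc a b) := fun t ht ↦ (hf t ht).continuousWithinAt
  calc ∫ t in a..b, ‖f t‖ ^ 2 ≤ ∫ _ in a..b, (b - a) * ∫ x in a..b, ‖f' x‖ ^ 2 :=
        intervalIntegral.integral_mono_on hab
          ((hcont.norm.pow 2).intervalIntegrable_of_Icc hab) intervalIntegrable_const fun t ht ↦ by
            simpa [hfc] using norm_sub_sq_le_integral_norm_sq_deriv hf hf' hc ht
    _ = (b - a) ^ 2 * ∫ t in a..b, ‖f' t‖ ^ 2 := by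
      rw [intervalIntegral.integral_const, smul_eq_mul]
      ring

lemma integral_norm_sq_iteratedDerivWithin_le {g : ℝ → E} {k ℓ : ℕ} (hab : a < b)
    (hg : ContDiffOn ℝ ℓ g (Icc a b)) (hc : c ∈ Icc a b)
    (hgc : ∀ i < ℓ, iteratedDerivWithin i g (Icc a b) c = 0) (hk : k ≤ ℓ) :
    ∫ t in a..b, ‖iteratedDerivWithin k g (Icc a b) t‖ ^ 2 ≤
      (b - a) ^ (2 * (ℓ - k)) * ∫ t in a..b, ‖iteratedDerivWithin ℓ g (Icc a b) t‖ ^ 2 := by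
  have hu : UniqueDiffOn ℝ (Icc a b) := uniqueDiffOn_Icc hab
  induction hk using Nat.decreasingInduction with
  | self => simp
  | of_succ k hk ih =>
    have hderiv : ∀ t ∈ Icc a b, HasDerivWithinAt (iteratedDerivWithin k g (Icc a b))
        (iteratedDerivWithin (k + 1) g (Icc a b) t) (Icc a b) t := fun t ht ↦ by
      rw [iteratedDerivWithin_succ]
      exact (hg.differentiableOn_iteratedDerivWithin (mod_cast hk) hu t ht).hasDerivWithinAt
    calc ∫ t in a..b, ‖iteratedDerivWithin k g (Icc a b) t‖ ^ 2
        ≤ (b - a) ^ 2 * ∫ t in a..b, ‖iteratedDerivWithin (k + 1) g (Icc a b) t‖ ^ 2 :=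
          integral_norm_sq_le_integral_norm_sq_deriv hderiv
            (hg.continuousOn_iteratedDerivWithin (mod_cast hk) hu) hc (hgc k hk)
      _ ≤ (b - a) ^ 2 * ((b - a) ^ (2 * (ℓ - (k + 1))) *
            ∫ t in a..b, ‖iteratedDerivWithin ℓ g (Icc a b) t‖ ^ 2) := by gcongr
      _ = (b - a) ^ (2 * (ℓ - k)) * ∫ t in a..b, ‖iteratedDerivWithin ℓ g (Icc a b) t‖ ^ 2 := by
        rw [← mul_assoc, ← pow_add]
        congr 2
        lia

end Friedrichs

lemma exists_forall_norm_le_mul_norm_of_injective {𝕜 V E F : Type*} [NontriviallyNormedField 𝕜]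
    [CompleteSpace 𝕜] [AddCommGroup V] [Module 𝕜 V] [Module.Finite 𝕜 V]
    [NormedAddCommGroup E] [NormedSpace 𝕜 E] [SeminormedAddCommGroup F] [NormedSpace 𝕜 F]
    {T : V →ₗ[𝕜] E} (hT : Function.Injective T) (L : V →ₗ[𝕜] F) :
    ∃ K, ∀ v, ‖L v‖ ≤ K * ‖T v‖ := by
  let e : V ≃ₗ[𝕜] LinearMap.range T := LinearEquiv.ofInjective T hT
  let S : LinearMap.range T →L[𝕜] F := (L ∘ₗ e.symm.toLinearMap).toContinuousLinearMap
  exact ⟨‖S‖, fun v ↦ by simpa [S, e] using S.le_opNorm (e v)⟩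

/-- The map sending a real polynomial to its class in `L²(a,b)`; it turns integrals of squares of
polynomials into norms. The interval is `Ioc a b` to match the interval integral. -/
noncomputable def polynomialToL2 (a b : ℝ) : ℝ[X] →ₗ[ℝ] Lp ℝ 2 (volume.restrict (Ioc a b)) where
  toFun p := (memLp_restrict_Ioc_of_continuousOn_Icc p.continuousOn 2).toLp (fun t ↦ p.eval t)
  map_add' p q := by simp only [eval_add]; rfl
  map_smul' c p := by simp only [eval_smul]; rfl

lemma norm_polynomialToL2_sq {a b : ℝ} (hab : a ≤ b) (p : ℝ[X]) :
    ‖polynomialToL2 a b p‖ ^ 2 = ∫ t in a..b, p.eval t ^ 2 := by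
  rw [intervalIntegral.integral_of_le hab, ← real_inner_self_eq_norm_sq, L2.inner_def]
  refine integral_congr_ae ?_
  filter_upwards [(memLp_restrict_Ioc_of_continuousOn_Icc p.continuousOn 2).coeFn_toLp] with t ht
  simp [polynomialToL2, ht]

lemma polynomialToL2_injective {a b : ℝ} (hab : a < b) :
    Function.Injective (polynomialToL2 a b) := by
  refine (injective_iff_map_eq_zero _).2 fun p hp ↦ ?_
  have hint : ∫ t in a..b, p.eval t ^ 2 = 0 := by simp [← norm_polynomialToL2_sq hab.le, hp]
  refine p.eq_zero_of_infinite_isRoot ((Icc_infinite hab).mono fun x hx ↦ ?_)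
  by_contra hpx
  exact hint.not_gt <| intervalIntegral.integral_pos hab (by fun_prop) (fun _ _ ↦ sq_nonneg _)
    ⟨x, hx, by positivity [show p.eval x ≠ 0 from hpx]⟩

lemma exists_integral_linearMap_eval_sq_le (r : ℕ) {a b : ℝ} (hab : a < b) (L : ℝ[X] →ₗ[ℝ] ℝ[X]) :
    ∃ K, 0 ≤ K ∧ ∀ p : ℝ[X], p.natDegree ≤ r →
      ∫ t in a..b, (L p).eval t ^ 2 ≤ K * ∫ t in a..b, p.eval t ^ 2 := by
  let T := polynomialToL2 a b
  let V := degreeLT ℝ (r + 1)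
  obtain ⟨K, h⟩ := exists_forall_norm_le_mul_norm_of_injective
    (T := T ∘ₗ V.subtype) ((polynomialToL2_injective hab).comp V.injective_subtype)
    (T ∘ₗ L ∘ₗ V.subtype)
  refine ⟨K ^ 2, sq_nonneg K, fun p hp ↦ ?_⟩
  have hpV : p ∈ V := mem_degreeLT.2 <|
    (degree_le_of_natDegree_le hp).trans_lt (mod_cast Nat.lt_succ_self r)
  rw [← norm_polynomialToL2_sq hab.le, ← norm_polynomialToL2_sq hab.le, ← mul_pow]
  gcongr
  exact h ⟨p, hpV⟩

lemma iterate_derivative_comp_C_mul_X_add_C {R : Type*} [CommSemiring R] (p : R[X]) (c d : R)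
    (k : ℕ) :
    derivative^[k] (p.comp (C c * X + C d)) =
      C (c ^ k) * (derivative^[k] p).comp (C c * X + C d) := by
  induction k with
  | zero => simp
  | succ k ih =>
    simp only [Function.iterate_succ_apply', ih, derivative_C_mul, derivative_comp, derivative_add,
      derivative_X, derivative_C, mul_one, add_zero, pow_succ, C_mul, mul_assoc]

lemma exists_integral_iterate_derivative_sq_le (r m : ℕ) :
    ∃ K, 0 ≤ K ∧ ∀ a b : ℝ, a < b → ∀ p : ℝ[X], p.natDegree ≤ r →
      (b - a) ^ (2 * m) * ∫ t in a..b, (derivative^[m] p).eval t ^ 2 ≤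
        K * ∫ t in a..b, p.eval t ^ 2 := by
  obtain ⟨K, hK, h⟩ := exists_integral_linearMap_eval_sq_le r zero_lt_one (derivative ^ m)
  refine ⟨K, hK, fun a b hab p hp ↦ ?_⟩
  have hba : 0 < b - a := sub_pos.2 hab
  have hscale (s : ℝ[X]) : ∫ t in (0 : ℝ)..1, s.eval ((b - a) * t + a) ^ 2 =
      (b - a)⁻¹ * ∫ t in a..b, s.eval t ^ 2 := by
    rw [intervalIntegral.integral_comp_mul_add (fun t ↦ s.eval t ^ 2) hba.ne' a]
    simp
  have hdeg : (p.comp (C (b - a) * X + C a)).natDegree ≤ r := by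
    rwa [natDegree_comp, natDegree_linear hba.ne', mul_one]
  have hunit := h _ hdeg
  simp only [Module.End.pow_apply, iterate_derivative_comp_C_mul_X_add_C, eval_mul, eval_C,
    eval_comp, eval_add, eval_X, mul_pow, intervalIntegral.integral_const_mul, hscale,
    ← pow_mul] at hunit
  rw [mul_left_comm, mul_left_comm K, mul_comm m] at hunit
  exact le_of_mul_le_mul_left hunit (inv_pos.2 hba)

section Derivatives

lemma exists_degree_lt_iterate_derivative_eval_eq {K : Type*} [Field K] [CharZero K] (n : ℕ) (x : K)
    (c : ℕ → K) :
    ∃ p : K[X], p.degree < n ∧ ∀ k < n, (derivative^[k] p).eval x = c k := by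
  let q : K[X] := ∑ k ∈ Finset.range n, monomial k (c k / k.factorial)
  have hq : q ∈ degreeLT K n := Submodule.sum_mem _ fun k hk ↦
    mem_degreeLT.2 ((degree_monomial_le _ _).trans_lt (mod_cast Finset.mem_range.1 hk))
  refine ⟨taylor (-x) q, by simpa [degree_taylor] using mem_degreeLT.1 hq, fun k hk ↦ ?_⟩
  have hcoeff : q.coeff k = c k / k.factorial := by simp [q, coeff_monomial, hk]
  rw [← factorial_smul_hasseDeriv, LinearMap.smul_apply, eval_smul, ← taylor_coeff,
    taylor_taylor, add_neg_cancel, taylor_zero, hcoeff, nsmul_eq_mul,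
    mul_div_cancel₀ _ (Nat.cast_ne_zero.2 k.factorial_ne_zero)]

variable {𝕜 : Type*} [NontriviallyNormedField 𝕜] {s : Set 𝕜} {x : 𝕜}

lemma iteratedDerivWithin_polynomial_eval (hs : UniqueDiffOn 𝕜 s) (hx : x ∈ s) (p : 𝕜[X]) (k : ℕ) :
    iteratedDerivWithin k (fun y ↦ p.eval y) s x = (derivative^[k] p).eval x := by
  induction k generalizing x with
  | zero => simp
  | succ k ih =>
    rw [iteratedDerivWithin_succ, derivWithin_congr (fun y hy ↦ ih hy) (ih hx),
      Polynomial.derivWithin _ (hs x hx), Function.iterate_succ_apply']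

lemma contDiff_polynomial_eval (p : 𝕜[X]) (n : WithTop ℕ∞) : ContDiff 𝕜 n fun x ↦ p.eval x := by
  simpa using p.contDiff_aeval (𝕜 := 𝕜) n

lemma iteratedDerivWithin_sub_polynomial_eval (hs : UniqueDiffOn 𝕜 s) (hx : x ∈ s) {f : 𝕜 → 𝕜}
    {k : ℕ} (hf : ContDiffWithinAt 𝕜 k f s x) (p : 𝕜[X]) :
    iteratedDerivWithin k (fun y ↦ f y - p.eval y) s x =
      iteratedDerivWithin k f s x - (derivative^[k] p).eval x := by
  rw [← iteratedDerivWithin_polynomial_eval hs hx]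
  exact iteratedDerivWithin_sub hx hs hf (contDiff_polynomial_eval p k).contDiffWithinAt

lemma exists_polynomial_iteratedDerivWithin_sub_eq [CharZero 𝕜] (hs : UniqueDiffOn 𝕜 s)
    (hx : x ∈ s) {f : 𝕜 → 𝕜} {n : ℕ} (hf : ContDiffOn 𝕜 n f s) :
    ∃ p : 𝕜[X], p.degree < n ∧
      (∀ k < n, iteratedDerivWithin k (fun y ↦ f y - p.eval y) s x = 0) ∧
      EqOn (iteratedDerivWithin n (fun y ↦ f y - p.eval y) s) (iteratedDerivWithin n f s) s := by
  obtain ⟨p, hdeg, hp⟩ := exists_degree_lt_iterate_derivative_eval_eq n x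
    fun k ↦ iteratedDerivWithin k f s x
  refine ⟨p, hdeg, fun k hk ↦ ?_, fun y hy ↦ ?_⟩
  · rw [iteratedDerivWithin_sub_polynomial_eval hs hx (hf.of_le (mod_cast hk.le) x hx), hp k hk,
      sub_self]
  · rw [iteratedDerivWithin_sub_polynomial_eval hs hy (hf y hy),
      iterate_derivative_eq_zero_of_degree_lt hdeg, eval_zero, sub_zero]

end Derivatives

/-- `IsPolynomialProjection a b r g q` says that `q` is the `L²(a,b)`-orthogonal projection of `g`
onto the polynomials of degree at most `r`. Lean gives a non-integrable function the integral `0`,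
so the notion is to be read for `g` integrable on `(a,b)`. -/
structure IsPolynomialProjection (a b : ℝ) (r : ℕ) (g : ℝ → ℝ) (q : ℝ[X]) : Prop where
  natDegree_le : q.natDegree ≤ r
  integral_sub_mul_eq_zero : ∀ p : ℝ[X], p.natDegree ≤ r →
    ∫ t in a..b, (g t - q.eval t) * p.eval t = 0

namespace IsPolynomialProjection

variable {a b : ℝ} {r : ℕ} {g : ℝ → ℝ} {q : ℝ[X]}

lemma sub_polynomial (h : IsPolynomialProjection a b r g q) {p : ℝ[X]} (hp : p.natDegree ≤ r) :
    IsPolynomialProjection a b r (fun t ↦ g t - p.eval t) (q - p) where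
  natDegree_le := natDegree_sub_le_of_le h.natDegree_le hp |>.trans_eq (max_self r)
  integral_sub_mul_eq_zero := by
    simpa only [eval_sub, sub_sub_sub_cancel_right] using h.integral_sub_mul_eq_zero

lemma integral_sq_le (h : IsPolynomialProjection a b r g q) (hab : a ≤ b)
    (hg : MemLp g 2 (volume.restrict (Ioc a b))) :
    ∫ t in a..b, q.eval t ^ 2 ≤ ∫ t in a..b, g t ^ 2 := by
  have hq : MemLp (fun t ↦ q.eval t) 2 (volume.restrict (Ioc a b)) :=
    memLp_restrict_Ioc_of_continuousOn_Icc q.continuousOn 2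
  have horth := h.integral_sub_mul_eq_zero q h.natDegree_le
  simp only [intervalIntegral.integral_of_le hab] at horth ⊢
  rw [integral_sq_eq_add_of_integral_sub_mul_eq_zero hg hq horth]
  exact le_add_of_nonneg_left (integral_nonneg fun _ ↦ sq_nonneg _)

end IsPolynomialProjection

lemma exists_integral_iterate_derivative_sq_le_of_isPolynomialProjection (r : ℕ) {m ℓ : ℕ}
    (hmℓ : m ≤ ℓ) :
    ∃ K, 0 ≤ K ∧ ∀ {a b c : ℝ} {g : ℝ → ℝ} {q : ℝ[X]}, a < b → c ∈ Icc a b →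
      ContDiffOn ℝ ℓ g (Icc a b) → (∀ k < ℓ, iteratedDerivWithin k g (Icc a b) c = 0) →
      IsPolynomialProjection a b r g q →
      ∫ t in a..b, (derivative^[m] q).eval t ^ 2 ≤
        K * ((b - a) ^ (2 * (ℓ - m)) * ∫ t in a..b, iteratedDerivWithin ℓ g (Icc a b) t ^ 2) := by
  obtain ⟨K, hK, hinv⟩ := exists_integral_iterate_derivative_sq_le r m
  refine ⟨K, hK, fun {a b c g q} hab hc hg hgc hq ↦ ?_⟩
  have hba : 0 < b - a := sub_pos.2 hab
  have hfried : ∫ t in a..b, g t ^ 2 ≤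
      (b - a) ^ (2 * ℓ) * ∫ t in a..b, iteratedDerivWithin ℓ g (Icc a b) t ^ 2 := by
    simpa only [iteratedDerivWithin_zero, Real.norm_eq_abs, sq_abs, Nat.sub_zero] using
      integral_norm_sq_iteratedDerivWithin_le hab hg hc hgc ℓ.zero_le
  have hstab := hq.integral_sq_le hab.le (memLp_restrict_Ioc_of_continuousOn_Icc hg.continuousOn 2)
  refine le_of_mul_le_mul_left ?_ (pow_pos hba (2 * m))
  calc (b - a) ^ (2 * m) * ∫ t in a..b, (derivative^[m] q).eval t ^ 2
      ≤ K * ∫ t in a..b, q.eval t ^ 2 := hinv a b hab q hq.natDegree_le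
    _ ≤ K * ((b - a) ^ (2 * (m + (ℓ - m))) *
          ∫ t in a..b, iteratedDerivWithin ℓ g (Icc a b) t ^ 2) := by
      rw [Nat.add_sub_cancel' hmℓ]
      gcongr
      exact hstab.trans hfried
    _ = (b - a) ^ (2 * m) * (K * ((b - a) ^ (2 * (ℓ - m)) *
          ∫ t in a..b, iteratedDerivWithin ℓ g (Icc a b) t ^ 2)) := by ring

lemma exists_integral_iteratedDerivWithin_sub_sq_le (r : ℕ) {m ℓ : ℕ} (hmℓ : m ≤ ℓ) :
    ∃ K, 0 < K ∧ ∀ {a b c : ℝ} {g : ℝ → ℝ} {q : ℝ[X]}, a < b → c ∈ Icc a b →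
      ContDiffOn ℝ ℓ g (Icc a b) → (∀ k < ℓ, iteratedDerivWithin k g (Icc a b) c = 0) →
      IsPolynomialProjection a b r g q →
      ∫ t in a..b, iteratedDerivWithin m (fun x ↦ g x - q.eval x) (Icc a b) t ^ 2 ≤
        K * ((b - a) ^ (2 * (ℓ - m)) * ∫ t in a..b, iteratedDerivWithin ℓ g (Icc a b) t ^ 2) := by
  obtain ⟨K, hK, hproj⟩ :=
    exists_integral_iterate_derivative_sq_le_of_isPolynomialProjection r hmℓ
  refine ⟨2 + 2 * K, by positivity, fun {a b c g q} hab hc hg hgc hq ↦ ?_⟩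
  have hu : UniqueDiffOn ℝ (Icc a b) := uniqueDiffOn_Icc hab
  set B := (b - a) ^ (2 * (ℓ - m)) * ∫ t in a..b, iteratedDerivWithin ℓ g (Icc a b) t ^ 2
  have hg_le : ∫ t in a..b, iteratedDerivWithin m g (Icc a b) t ^ 2 ≤ B := by
    simpa only [Real.norm_eq_abs, sq_abs] using
      integral_norm_sq_iteratedDerivWithin_le hab hg hc hgc hmℓ
  have hq_le : ∫ t in a..b, (derivative^[m] q).eval t ^ 2 ≤ K * B := hproj hab hc hg hgc hq
  have hsub : ∫ t in a..b, iteratedDerivWithin m (fun x ↦ g x - q.eval x) (Icc a b) t ^ 2 =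
      ∫ t in a..b, (iteratedDerivWithin m g (Icc a b) t - (derivative^[m] q).eval t) ^ 2 :=
    intervalIntegral.integral_congr fun t ht ↦ by
      rw [uIcc_of_le hab.le] at ht
      simp only [iteratedDerivWithin_sub_polynomial_eval hu ht (hg.of_le (mod_cast hmℓ) t ht)]
  have htriangle : ∫ t in a..b, (iteratedDerivWithin m g (Icc a b) t -
      (derivative^[m] q).eval t) ^ 2 ≤ 2 * (∫ t in a..b, iteratedDerivWithin m g (Icc a b) t ^ 2) +
        2 * ∫ t in a..b, (derivative^[m] q).eval t ^ 2 := by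
    simpa only [Real.norm_eq_abs, sq_abs, intervalIntegral.integral_of_le hab.le] using
      integral_norm_sub_sq_le
        (memLp_restrict_Ioc_of_continuousOn_Icc
          (hg.continuousOn_iteratedDerivWithin (mod_cast hmℓ) hu) 2)
        (memLp_restrict_Ioc_of_continuousOn_Icc (derivative^[m] q).continuousOn 2)
  linarith

/-- One-dimensional Bramble–Hilbert-type approximation estimate for the
`L²(a,b)`-orthogonal projection onto polynomials of degree at most `r`:
`‖(ψ - q)^{(m)}‖_{L²(a,b)} ≤ C (b-a)^{ℓ-m} ‖ψ^{(ℓ)}‖_{L²(a,b)}` for `m ≤ ℓ ≤ r + 1`,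
with `C` depending only on `r`, `ℓ`, `m`. -/
theorem proj_bramble_hilbert (r ℓ m : ℕ) (hmℓ : m ≤ ℓ) (hℓr : ℓ ≤ r + 1) :
    ∃ C : ℝ, 0 < C ∧ ∀ a b : ℝ, a < b → ∀ ψ : ℝ → ℝ,
      ContDiffOn ℝ ℓ ψ (Set.Icc a b) →
      ∀ q : Polynomial ℝ, q.natDegree ≤ r →
        (∀ p : Polynomial ℝ, p.natDegree ≤ r →
          (∫ t in a..b, (ψ t - q.eval t) * p.eval t) = 0) →
        Real.sqrt (∫ t in a..b,
            (iteratedDerivWithin m (fun s => ψ s - q.eval s) (Set.Icc a b) t) ^ 2) ≤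
          C * (b - a) ^ (ℓ - m) *
            Real.sqrt (∫ t in a..b, (iteratedDerivWithin ℓ ψ (Set.Icc a b) t) ^ 2) := by
  obtain ⟨K, hK, hbound⟩ := exists_integral_iteratedDerivWithin_sub_sq_le r hmℓ
  refine ⟨√K, Real.sqrt_pos.2 hK, fun a b hab ψ hψ q hq horth ↦ ?_⟩
  have ha : a ∈ Icc a b := left_mem_Icc.2 hab.le
  obtain ⟨T, hTdeg, hTa, hTℓ⟩ :=
    exists_polynomial_iteratedDerivWithin_sub_eq (uniqueDiffOn_Icc hab) ha hψ
  have hTr : T.natDegree ≤ r := natDegree_le_iff_coeff_eq_zero.2 fun k hk ↦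
    coeff_eq_zero_of_degree_lt (hTdeg.trans_le (mod_cast hℓr.trans hk))
  have hproj : IsPolynomialProjection a b r (fun t ↦ ψ t - T.eval t) (q - T) :=
    IsPolynomialProjection.sub_polynomial ⟨hq, horth⟩ hTr
  have hsq := hbound hab ha (hψ.sub (contDiff_polynomial_eval T ℓ).contDiffOn) hTa hproj
  have hℓ : ∫ t in a..b, iteratedDerivWithin ℓ (fun x ↦ ψ x - T.eval x) (Icc a b) t ^ 2 =
      ∫ t in a..b, iteratedDerivWithin ℓ ψ (Icc a b) t ^ 2 :=
    intervalIntegral.integral_congr fun t ht ↦ by rw [hTℓ (uIcc_of_le hab.le ▸ ht)]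
  simp only [eval_sub, sub_sub_sub_cancel_right, hℓ] at hsq
  have hpow : 0 ≤ (b - a) ^ (ℓ - m) := pow_nonneg (sub_nonneg.2 hab.le) _
  refine (Real.sqrt_le_sqrt hsq).trans_eq ?_
  rw [Real.sqrt_mul hK.le, mul_comm 2, pow_mul, Real.sqrt_mul (sq_nonneg _), Real.sqrt_sq hpow,
    mul_assoc]
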